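/- Upper bound on Λ(ε, τ): let 0 < ε < 1/2 and 0 < τ < 1. For each n let k_n = ⌊εn⌋ and s_n = ⌊(2 : ℝ)^(τn)⌋; let R_n be the maximum, over subsets A, B of the Boolean cube Fin n → Bool with |A| ≤ s_n and |B| ≤ s_n, of the number of pairs (x, y) ∈ A × B with Hamming distance exactly k_n; and let G_n = 2^n · (n choose k_n) be the total number of pairs (x, y) at Hamming distance exactly k_n. Then limsup_{n → ∞} (logb 2 ((R_n : ℝ) / G_n)) / n ≤ −(1 − τ)/(1 − ε). -/

import Mathlib

open Finset Filter

/-- The maximal number of pairs at Hamming distance `⌊ε n⌋` inside a rectangle `A × B`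
with `|A|, |B| ≤ ⌊2^(τ n)⌋`. -/
noncomputable def Rn (τ ε : ℝ) (n : ℕ) : ℕ :=
  ((Finset.univ.powerset.filter
      fun A : Finset (Fin n → Bool) => A.card ≤ ⌊(2 : ℝ) ^ (τ * n)⌋₊) ×ˢ
   (Finset.univ.powerset.filter
      fun B : Finset (Fin n → Bool) => B.card ≤ ⌊(2 : ℝ) ^ (τ * n)⌋₊)).sup
    fun AB => ((AB.1 ×ˢ AB.2).filter
      fun p => hammingDist p.1 p.2 = ⌊ε * n⌋₊).card

/-- The total number of pairs of points of the Boolean cube at Hamming distance `⌊ε n⌋`. -/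
noncomputable def Gn (ε : ℝ) (n : ℕ) : ℕ := 2 ^ n * n.choose ⌊ε * n⌋₊

/-- The binary entropy function (base-2 logarithms). -/
noncomputable def binH (t : ℝ) : ℝ := -t * Real.logb 2 t - (1 - t) * Real.logb 2 (1 - t)

lemma tp_bern {r x : ℝ} (hr : r ≤ 0) (hx : 0 < x) : 1 + r * (x - 1) ≤ x ^ r := by
  rw [Real.rpow_def_of_pos hx]
  have h1 := Real.add_one_le_exp (Real.log x * r)
  have h2 := Real.log_le_sub_one_of_pos hx
  nlinarith

lemma tp_first {q : ℝ} (hq0 : 0 < q) (hq1 : q < 1) {b : ℝ} (hb0 : 0 ≤ b) (hb1 : b ≤ 1) :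
    2 * q * b ≤ (1 + b) ^ q - (1 - b) ^ q := by
  have hm : MonotoneOn (fun b : ℝ => (1 + b) ^ q - (1 - b) ^ q - 2 * q * b) (Set.Icc 0 1) := by
    apply monotoneOn_of_hasDerivWithinAt_nonneg (convex_Icc 0 1)
      (f' := fun b => (1 * q * (1 + b) ^ (q - 1)) - ((-1) * q * (1 - b) ^ (q - 1)) - 2 * q)
    · apply ContinuousOn.sub
      · apply ContinuousOn.sub
        · exact ContinuousOn.rpow_const (by fun_prop) (fun x hx => Or.inr hq0.le)
        · exact ContinuousOn.rpow_const (by fun_prop) (fun x hx => Or.inr hq0.le)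
      · fun_prop
    · intro x hx
      rw [interior_Icc] at hx
      apply HasDerivAt.hasDerivWithinAt
      have e1 : HasDerivAt (fun b : ℝ => 1 + b) 1 x := by simpa using (hasDerivAt_id x).const_add 1
      have e2 : HasDerivAt (fun b : ℝ => 1 - b) (-1) x := by simpa using (hasDerivAt_id x).const_sub 1
      have e3 : HasDerivAt (fun b : ℝ => 2 * q * b) (2 * q) x := by
        simpa using (hasDerivAt_id x).const_mul (2 * q)
      exact ((e1.rpow_const (Or.inl (by linarith [hx.1]))).sub
        (e2.rpow_const (Or.inl (by linarith [hx.2])))).sub e3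
    · intro x hx
      rw [interior_Icc] at hx
      have h1 := tp_bern (r := q - 1) (x := 1 + x) (by linarith) (by linarith [hx.1])
      have h2 := tp_bern (r := q - 1) (x := 1 - x) (by linarith) (by linarith [hx.2])
      nlinarith
  have := hm (Set.mem_Icc.2 ⟨le_refl 0, zero_le_one⟩) (Set.mem_Icc.2 ⟨hb0, hb1⟩) hb0
  simp at this
  linarith

lemma tp_second {p : ℝ} (hp0 : 1 < p) (hp1 : p < 2) {b : ℝ} (hb0 : 0 ≤ b) (hb1 : b ≤ 1) :
    2 + p * (p - 1) * b ^ 2 ≤ (1 + b) ^ p + (1 - b) ^ p := by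
  have hm : MonotoneOn (fun b : ℝ => (1 + b) ^ p + (1 - b) ^ p - p * (p - 1) * b ^ 2)
      (Set.Icc 0 1) := by
    apply monotoneOn_of_hasDerivWithinAt_nonneg (convex_Icc 0 1)
      (f' := fun b => (1 * p * (1 + b) ^ (p - 1)) + ((-1) * p * (1 - b) ^ (p - 1))
        - p * (p - 1) * (2 * b))
    · apply ContinuousOn.sub
      · apply ContinuousOn.add
        · exact ContinuousOn.rpow_const (by fun_prop) (fun x hx => Or.inr (by linarith))
        · exact ContinuousOn.rpow_const (by fun_prop) (fun x hx => Or.inr (by linarith))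
      · fun_prop
    · intro x hx
      rw [interior_Icc] at hx
      apply HasDerivAt.hasDerivWithinAt
      have e1 : HasDerivAt (fun b : ℝ => 1 + b) 1 x := by simpa using (hasDerivAt_id x).const_add 1
      have e2 : HasDerivAt (fun b : ℝ => 1 - b) (-1) x := by simpa using (hasDerivAt_id x).const_sub 1
      have e3 : HasDerivAt (fun b : ℝ => p * (p - 1) * b ^ 2) (p * (p - 1) * (2 * x)) x := by
        simpa using (hasDerivAt_pow 2 x).const_mul (p * (p - 1))
      exact ((e1.rpow_const (Or.inl (by linarith [hx.1]))).add
        (e2.rpow_const (Or.inl (by linarith [hx.2])))).sub e3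
    · intro x hx
      rw [interior_Icc] at hx
      have h1 := tp_first (q := p - 1) (by linarith) (by linarith) hx.1.le hx.2.le
      have := mul_le_mul_of_nonneg_left h1 (by linarith : 0 ≤ p)
      linarith
  have := hm (Set.mem_Icc.2 ⟨le_refl 0, zero_le_one⟩) (Set.mem_Icc.2 ⟨hb0, hb1⟩) hb0
  simp at this
  linarith

lemma tp_aux {p : ℝ} (hp0 : 1 < p) (hp1 : p < 2) {a b : ℝ} (hb0 : 0 ≤ b) (hab : b ≤ a) :
    ((a + b) / 2) ^ 2 + (p - 1) * ((a - b) / 2) ^ 2 ≤ ((a ^ p + b ^ p) / 2) ^ (2 / p) := by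
  obtain ⟨u, hu⟩ : ∃ u, u = (a + b) / 2 := ⟨_, rfl⟩
  obtain ⟨v, hv⟩ : ∃ v, v = (a - b) / 2 := ⟨_, rfl⟩
  have ha : a = u + v := by linarith
  have hb : b = u - v := by linarith
  have hv0 : 0 ≤ v := by linarith
  have hvu : v ≤ u := by linarith
  rw [← hu, ← hv]
  rcases (by linarith : 0 ≤ u).eq_or_lt with h | hupos
  · have : v = 0 := by linarith
    rw [← h, this]
    simp only [ne_eq, OfNat.ofNat_ne_zero, not_false_eq_true, zero_pow, mul_zero, add_zero]
    have : 0 ≤ a := by linarith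
    positivity
  · obtain ⟨t, ht⟩ : ∃ t, t = v / u := ⟨_, rfl⟩
    have hvt : v = u * t := by rw [ht]; field_simp
    have ht0 : 0 ≤ t := by rw [ht]; positivity
    have ht1 : t ≤ 1 := by rw [ht]; exact (div_le_one hupos).2 hvu
    have h1 := tp_second hp0 hp1 ht0 ht1
    have h2 : (1 + (p - 1) * t ^ 2) ^ (p / 2) ≤ 1 + (p / 2) * ((p - 1) * t ^ 2) :=
      rpow_one_add_le_one_add_mul_self (by nlinarith [sq_nonneg t]) (by linarith) (by linarith)
    have e1 : a ^ p + b ^ p = u ^ p * ((1 + t) ^ p + (1 - t) ^ p) := by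
      rw [ha, hb, hvt, mul_add, ← Real.mul_rpow hupos.le (by linarith),
        ← Real.mul_rpow hupos.le (by linarith)]
      ring_nf
    have hpos : 0 ≤ 1 + (p - 1) * t ^ 2 := by nlinarith [sq_nonneg t]
    have e2 : u ^ 2 + (p - 1) * v ^ 2 = (u ^ p * (1 + (p - 1) * t ^ 2) ^ (p / 2)) ^ (2 / p) := by
      rw [Real.mul_rpow (by positivity) (by positivity), ← Real.rpow_mul hupos.le,
        ← Real.rpow_mul hpos]
      rw [show p * (2 / p) = 2 by field_simp, show p / 2 * (2 / p) = 1 by field_simp, hvt]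
      simp
      ring
    rw [e2, e1]
    have hup : 0 ≤ u ^ p := by positivity
    apply Real.rpow_le_rpow (by positivity) _ (by positivity)
    rw [mul_div_assoc]
    apply mul_le_mul_of_nonneg_left _ hup
    linarith

lemma tp_bonami {p : ℝ} (hp0 : 1 < p) (hp1 : p < 2) {a b : ℝ} (ha0 : 0 ≤ a) (hb0 : 0 ≤ b) :
    ((a + b) / 2) ^ 2 + (p - 1) * ((a - b) / 2) ^ 2 ≤ ((a ^ p + b ^ p) / 2) ^ (2 / p) := by
  rcases le_total b a with h | h
  · exact tp_aux hp0 hp1 hb0 h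
  · have := tp_aux hp0 hp1 ha0 h
    rw [add_comm (a ^ p), add_comm a]
    convert this using 2
    ring

lemma two_point {e p : ℝ} (hp : p = 2 - 2 * e) (he0 : 0 < e) (he1 : e < 1 / 2)
    {a b c d : ℝ} (ha : 0 ≤ a) (hb : 0 ≤ b) (hc : 0 ≤ c) (hd : 0 ≤ d) :
    (1 - e) * (a * c) + e * (a * d) + (e * (b * c) + (1 - e) * (b * d)) ≤
      2 ^ (1 - 2 / p) * ((a ^ p + b ^ p) ^ (1 / p) * (c ^ p + d ^ p) ^ (1 / p)) := by
  have hp0 : 1 < p := by linarith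
  have hp1 : p < 2 := by linarith
  have h1 := tp_bonami hp0 hp1 ha hb
  have h2 := tp_bonami hp0 hp1 hc hd
  have hX : 0 ≤ a ^ p + b ^ p := by positivity
  have hY : 0 ≤ c ^ p + d ^ p := by positivity
  have key : ∀ X : ℝ, 0 ≤ X → (X / 2) ^ (2 / p) = ((X / 2) ^ (1 / p)) ^ 2 := by
    intro X hX
    rw [← Real.rpow_natCast, ← Real.rpow_mul (by positivity)]
    congr 1; push_cast; ring
  rw [key _ hX] at h1
  rw [key _ hY] at h2
  have e1 : 2 ^ (1 - 2 / p) * ((a ^ p + b ^ p) ^ (1 / p) * (c ^ p + d ^ p) ^ (1 / p))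
      = 2 * (((a ^ p + b ^ p) / 2) ^ (1 / p) * ((c ^ p + d ^ p) / 2) ^ (1 / p)) := by
    rw [Real.div_rpow hX (by norm_num), Real.div_rpow hY (by norm_num),
      Real.rpow_sub (by norm_num), Real.rpow_one, show 2 / p = 1 / p + 1 / p by ring,
      Real.rpow_add (by norm_num)]
    field_simp
  rw [e1]
  set M := ((a ^ p + b ^ p) / 2) ^ (1 / p) with hM
  set N := ((c ^ p + d ^ p) / 2) ^ (1 / p) with hN
  have hM0 : 0 ≤ M := by positivity
  have hN0 : 0 ≤ N := by positivity
  have e2 : (1 - e) * (a * c) + e * (a * d) + (e * (b * c) + (1 - e) * (b * d))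
      = 2 * (((a + b) / 2) * ((c + d) / 2) + (p - 1) * (((a - b) / 2) * ((c - d) / 2))) := by
    rw [hp]; ring
  rw [e2]
  apply mul_le_mul_of_nonneg_left _ (by norm_num)
  apply abs_le_of_sq_le_sq' _ (by positivity) |>.2
  generalize (a + b) / 2 = u at *
  generalize (a - b) / 2 = v at *
  generalize (c + d) / 2 = s at *
  generalize (c - d) / 2 = t at *
  have hp' : 0 ≤ p - 1 := by linarith
  calc _ ≤ (u ^ 2 + (p - 1) * v ^ 2) * (s ^ 2 + (p - 1) * t ^ 2) := by
        nlinarith [mul_nonneg hp' (sq_nonneg (u * t - v * s))]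
    _ ≤ M ^ 2 * N ^ 2 := by
        apply mul_le_mul h1 h2 _ (by positivity)
        positivity
    _ = _ := by ring

/-- noise kernel -/
noncomputable def nK (e : ℝ) {n : ℕ} (x y : Fin n → Bool) : ℝ :=
  ∏ i, if x i = y i then 1 - e else e

lemma nK_eq (e : ℝ) {n : ℕ} (x y : Fin n → Bool) :
    nK e x y = e ^ hammingDist x y * (1 - e) ^ (n - hammingDist x y) := by
  unfold nK hammingDist
  rw [Finset.prod_ite, Finset.prod_const, Finset.prod_const, mul_comm]
  congr 2
  have := Finset.card_filter_add_card_filter_not (s := (univ : Finset (Fin n))) (fun i => x i = y i)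
  simp only [card_univ, Fintype.card_fin] at this
  simp only [ne_eq]
  omega

lemma sum_cons {n : ℕ} (F : (Fin (n + 1) → Bool) → ℝ) :
    ∑ x, F x = ∑ x, F (Fin.cons true x) + ∑ x, F (Fin.cons false x) := by
  rw [← (Fin.consEquiv (fun _ : Fin (n + 1) => Bool)).sum_comp, Fintype.sum_prod_type]
  simp [Fin.consEquiv]

lemma hyper {e p : ℝ} (hp : p = 2 - 2 * e) (he0 : 0 < e) (he1 : e < 1 / 2) (n : ℕ) :
    ∀ f g : (Fin n → Bool) → ℝ, (∀ x, 0 ≤ f x) → (∀ x, 0 ≤ g x) →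
    ∑ x, ∑ y, f x * g y * nK e x y ≤
      (2 ^ (1 - 2 / p)) ^ n * ((∑ x, f x ^ p) ^ (1 / p) * (∑ x, g x ^ p) ^ (1 / p)) := by
  have hp0 : 0 < p := by linarith
  induction n with
  | zero =>
    intro f g hf hg
    simp only [Fintype.sum_unique, nK, pow_zero, one_mul]
    rw [← Real.rpow_mul (hf _), ← Real.rpow_mul (hg _), mul_one_div_cancel hp0.ne']
    simp
  | succ n ih =>
    intro f g hf hg
    have ihh := fun i j : Bool => ih (fun x => f (Fin.cons i x)) (fun x => g (Fin.cons j x))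
      (fun x => hf _) (fun x => hg _)
    have hS : ∀ (f : (Fin (n + 1) → Bool) → ℝ), (∀ x, 0 ≤ f x) → ∀ i : Bool,
        0 ≤ ∑ x : Fin n → Bool, f (Fin.cons i x) ^ p :=
      fun f hf i => Finset.sum_nonneg fun x _ => Real.rpow_nonneg (hf _) _
    have key := two_point hp he0 he1 (Real.rpow_nonneg (hS f hf true) (1 / p))
      (Real.rpow_nonneg (hS f hf false) (1 / p)) (Real.rpow_nonneg (hS g hg true) (1 / p))
      (Real.rpow_nonneg (hS g hg false) (1 / p))
    have hcan : ∀ X : ℝ, 0 ≤ X → (X ^ (1 / p)) ^ p = X := by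
      intro X hX
      rw [← Real.rpow_mul hX, one_div_mul_cancel hp0.ne', Real.rpow_one]
    rw [hcan _ (hS f hf _), hcan _ (hS f hf _), hcan _ (hS g hg _), hcan _ (hS g hg _),
      ← sum_cons (fun x => f x ^ p), ← sum_cons (fun x => g x ^ p)] at key
    have hC : (0 : ℝ) ≤ (2 ^ (1 - 2 / p)) ^ n := by positivity
    have key2 := mul_le_mul_of_nonneg_left key hC
    rw [pow_succ, mul_assoc ((2 ^ (1 - 2 / p)) ^ n)]
    refine le_trans ?_ key2
    have hk : ∀ (i j : Bool) (x y : Fin n → Bool),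
        nK e (Fin.cons i x : Fin (n + 1) → Bool) (Fin.cons j y)
        = (if i = j then 1 - e else e) * nK e x y := by
      intro i j x y
      simp [nK, Fin.prod_univ_succ]
    have hexp : ∑ x, ∑ y, f x * g y * nK e x y =
        ((1 - e) * (∑ x, ∑ y, f (Fin.cons true x) * g (Fin.cons true y) * nK e x y)
        + e * (∑ x, ∑ y, f (Fin.cons true x) * g (Fin.cons false y) * nK e x y))
        + (e * (∑ x, ∑ y, f (Fin.cons false x) * g (Fin.cons true y) * nK e x y)
        + (1 - e) * (∑ x, ∑ y, f (Fin.cons false x) * g (Fin.cons false y) * nK e x y)) := by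
      rw [sum_cons]
      simp_rw [sum_cons (fun y => f _ * g y * nK e _ y), hk, Finset.sum_add_distrib,
        Finset.mul_sum]
      simp only [if_true, reduceCtorEq, if_false]
      congr 2 <;> refine Finset.sum_congr rfl fun x _ => Finset.sum_congr rfl fun y _ => ?_
      all_goals ring
    rw [hexp]
    have he : 0 ≤ 1 - e := by linarith
    have q1 := mul_le_mul_of_nonneg_left (ihh true true) he
    have q2 := mul_le_mul_of_nonneg_left (ihh true false) he0.le
    have q3 := mul_le_mul_of_nonneg_left (ihh false true) he0.le
    have q4 := mul_le_mul_of_nonneg_left (ihh false false) he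
    linarith

lemma hyper_set {e : ℝ} (he0 : 0 < e) (he1 : e < 1 / 2) (n k : ℕ) (A B : Finset (Fin n → Bool)) :
    (((A ×ˢ B).filter fun q => hammingDist q.1 q.2 = k).card : ℝ) * (e ^ k * (1 - e) ^ (n - k)) ≤
      (2 ^ (1 - 1 / (1 - e))) ^ n *
        ((A.card : ℝ) ^ (1 / (2 - 2 * e)) * (B.card : ℝ) ^ (1 / (2 - 2 * e))) := by
  classical
  have h := hyper (e := e) rfl he0 he1 n (fun x => if x ∈ A then 1 else 0)
    (fun x => if x ∈ B then 1 else 0) (fun x => by positivity) (fun x => by positivity)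
  have hs : ∀ A : Finset (Fin n → Bool), ∑ x, (if x ∈ A then (1 : ℝ) else 0) ^ (2 - 2 * e)
      = A.card := by
    intro A
    have : ∀ x, (if x ∈ A then (1 : ℝ) else 0) ^ (2 - 2 * e) = if x ∈ A then 1 else 0 := by
      intro x
      split_ifs
      · simp
      · exact Real.zero_rpow (by linarith)
    simp [this]
  rw [hs, hs, show 2 / (2 - 2 * e) = 1 / (1 - e) by
    rw [show 2 - 2 * e = 2 * (1 - e) by ring]
    have : 1 - e ≠ 0 := by linarith
    field_simp] at h
  refine le_trans ?_ h
  have hK : ∀ x y : Fin n → Bool, 0 ≤ nK e x y := by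
    intro x y
    rw [nK_eq]
    have : 0 ≤ 1 - e := by linarith
    positivity
  have e1 : ∑ x, ∑ y, (if x ∈ A then (1 : ℝ) else 0) * (if y ∈ B then 1 else 0) * nK e x y
     = ∑ q ∈ A ×ˢ B, nK e q.1 q.2 := by
    rw [Finset.sum_product]
    simp
  rw [e1, ← nsmul_eq_mul, ← Finset.sum_const]
  refine le_trans (le_of_eq ?_) (Finset.sum_le_sum_of_subset_of_nonneg (Finset.filter_subset (fun q => hammingDist q.1 q.2 = k) (A ×ˢ B)) fun q _ _ => hK _ _)
  refine Finset.sum_congr rfl fun q hq => ?_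
  rw [nK_eq, (Finset.mem_filter.1 hq).2]

/-- binomial weight -/
noncomputable def bT (e : ℝ) (n j : ℕ) : ℝ := (n.choose j : ℝ) * (e ^ j * (1 - e) ^ (n - j))

lemma bT_nonneg {e : ℝ} (he0 : 0 < e) (he1 : e < 1 / 2) (n j : ℕ) : 0 ≤ bT e n j := by
  have : 0 ≤ 1 - e := by linarith
  unfold bT
  positivity

lemma bT_step {e : ℝ} {n j : ℕ} (hj : j < n) :
    bT e n (j + 1) * ((j + 1) * (1 - e)) = bT e n j * ((n - j) * e) := by
  have h : ((n.choose (j + 1) * (j + 1) : ℕ) : ℝ) = ((n.choose j * (n - j) : ℕ) : ℝ) := by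
    rw [Nat.choose_succ_right_eq]
  rw [Nat.cast_mul, Nat.cast_mul, Nat.cast_sub hj.le] at h
  push_cast at h
  unfold bT
  obtain ⟨m, rfl⟩ : ∃ m, n = j + 1 + m := ⟨n - (j + 1), by omega⟩
  rw [show j + 1 + m - (j + 1) = m by omega, show j + 1 + m - j = m + 1 by omega]
  calc _ = ((j + 1 + m).choose (j + 1) * ((j : ℝ) + 1)) * (e ^ (j + 1) * (1 - e) ^ (m + 1)) := by ring
    _ = _ := by rw [h]; ring

lemma bT_le {e : ℝ} (he0 : 0 < e) (he1 : e < 1 / 2) (n j : ℕ) :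
    bT e n j ≤ 2 * bT e n ⌊e * n⌋₊ := by
  set k := ⌊e * n⌋₊ with hk
  have hen : 0 ≤ e * n := by positivity
  have hk1 : (k : ℝ) ≤ e * n := Nat.floor_le hen
  have hk2 : e * n < k + 1 := Nat.lt_floor_add_one _
  have hkn : k ≤ n := by
    have : (k : ℝ) ≤ n := by nlinarith [(Nat.cast_nonneg n : (0 : ℝ) ≤ n)]
    exact_mod_cast this
  have hnn := bT_nonneg he0 he1 n
  have down : ∀ m, j ≤ m → m ≤ k → bT e n j ≤ bT e n m := by
    intro m hm
    induction m, hm using Nat.le_induction with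
    | base => intro _; exact le_rfl
    | succ m hm ih =>
      intro hmk
      refine (ih (by omega)).trans ?_
      have h := bT_step (e := e) (n := n) (j := m) (by omega)
      have hmk' : (m : ℝ) + 1 ≤ k := by exact_mod_cast hmk
      have hm0 : (0 : ℝ) ≤ m := Nat.cast_nonneg m
      have hpos : 0 < ((m : ℝ) + 1) * (1 - e) := mul_pos (by linarith) (by linarith)
      refine le_of_mul_le_mul_right ?_ hpos
      rw [h]
      apply mul_le_mul_of_nonneg_left _ (hnn m)
      nlinarith
  have up : ∀ m, k + 1 ≤ m → bT e n m ≤ 2 * bT e n k := by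
    intro m hm
    induction m, hm using Nat.le_induction with
    | base =>
      rcases hkn.eq_or_lt with h | h
      · have : bT e n (k + 1) = 0 := by
          unfold bT; rw [Nat.choose_eq_zero_of_lt (by omega)]; simp
        rw [this]; linarith [hnn k]
      · have h := bT_step (e := e) h
        have hm0 : (0 : ℝ) ≤ k := Nat.cast_nonneg k
        have hpos : 0 < ((k : ℝ) + 1) * (1 - e) := mul_pos (by linarith) (by linarith)
        refine le_of_mul_le_mul_right ?_ hpos
        rw [h, mul_comm 2, mul_assoc]
        apply mul_le_mul_of_nonneg_left _ (hnn k)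
        nlinarith
    | succ m hm ih =>
      refine le_trans ?_ ih
      rcases le_or_gt n m with h | h
      · have : bT e n (m + 1) = 0 := by
          unfold bT; rw [Nat.choose_eq_zero_of_lt (by omega)]; simp
        rw [this]; exact hnn m
      · have h := bT_step (e := e) h
        have hm0 : (0 : ℝ) ≤ m := Nat.cast_nonneg m
        have hmk' : (k : ℝ) + 1 ≤ m := by exact_mod_cast hm
        have hpos : 0 < ((m : ℝ) + 1) * (1 - e) := mul_pos (by linarith) (by linarith)
        refine le_of_mul_le_mul_right ?_ hpos
        rw [h]
        apply mul_le_mul_of_nonneg_left _ (hnn m)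
        nlinarith
  rcases le_or_gt j k with h | h
  · linarith [down k h le_rfl, hnn k]
  · exact up j h

lemma bT_big {e : ℝ} (he0 : 0 < e) (he1 : e < 1 / 2) (n : ℕ) :
    1 ≤ 2 * (n + 1) * bT e n ⌊e * n⌋₊ := by
  have h : ∑ j ∈ Finset.range (n + 1), bT e n j = 1 := by
    have := add_pow e (1 - e) n
    rw [add_sub_cancel, one_pow] at this
    rw [this]
    exact Finset.sum_congr rfl fun j _ => by unfold bT; ring
  refine h.symm.le.trans ?_
  refine (Finset.sum_le_sum fun j _ => bT_le he0 he1 n j).trans ?_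
  rw [Finset.sum_const, nsmul_eq_mul, Finset.card_range]
  push_cast
  linarith

lemma Rn_upper {e t : ℝ} (he0 : 0 < e) (he1 : e < 1 / 2) (n : ℕ) :
    (Rn t e n : ℝ) ≤ 2 * (n + 1) * (2 : ℝ) ^ ((n : ℝ) * (-(1 - t) / (1 - e))) * Gn e n := by
  obtain ⟨AB, hAB, hR⟩ := Finset.exists_mem_eq_sup
    ((Finset.univ.powerset.filter
      fun A : Finset (Fin n → Bool) => A.card ≤ ⌊(2 : ℝ) ^ (t * n)⌋₊) ×ˢ
   (Finset.univ.powerset.filter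
      fun B : Finset (Fin n → Bool) => B.card ≤ ⌊(2 : ℝ) ^ (t * n)⌋₊)) ⟨(∅, ∅), by simp⟩
    (fun AB => ((AB.1 ×ˢ AB.2).filter
      fun p => hammingDist p.1 p.2 = ⌊e * n⌋₊).card)
  have hR' : Rn t e n = ((AB.1 ×ˢ AB.2).filter
      fun p => hammingDist p.1 p.2 = ⌊e * n⌋₊).card := hR
  simp only [Finset.mem_product, Finset.mem_filter] at hAB
  have hc : ∀ A : Finset (Fin n → Bool), A.card ≤ ⌊(2 : ℝ) ^ (t * n)⌋₊ →
      (A.card : ℝ) ^ (1 / (2 - 2 * e)) ≤ (2 : ℝ) ^ (t * n * (1 / (2 - 2 * e))) := by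
    intro A hA
    rw [Real.rpow_mul (by norm_num)]
    apply Real.rpow_le_rpow (by positivity) _ (one_div_nonneg.2 (by linarith))
    exact (Nat.le_floor_iff (by positivity)).1 hA
  have h := hyper_set he0 he1 n ⌊e * n⌋₊ AB.1 AB.2
  rw [← hR'] at h
  have h2 : (2 ^ (1 - 1 / (1 - e))) ^ n *
        ((AB.1.card : ℝ) ^ (1 / (2 - 2 * e)) * (AB.2.card : ℝ) ^ (1 / (2 - 2 * e))) ≤
        (2 : ℝ) ^ ((n : ℝ) * (-(1 - t) / (1 - e))) * 2 ^ n := by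
    refine (mul_le_mul_of_nonneg_left (mul_le_mul (hc _ hAB.1.2) (hc _ hAB.2.2)
      (by positivity) (by positivity)) (by positivity)).trans (le_of_eq ?_)
    rw [← Real.rpow_natCast, ← Real.rpow_natCast, ← Real.rpow_mul (by norm_num),
      ← Real.rpow_add (by norm_num), ← Real.rpow_add (by norm_num), ← Real.rpow_add (by norm_num)]
    congr 1
    rw [show 2 - 2 * e = 2 * (1 - e) by ring]
    have : 1 - e ≠ 0 := by linarith
    field_simp
    ring
  have hb := bT_big he0 he1 n
  have hG : (Gn e n : ℝ) = 2 ^ n * (n.choose ⌊e * n⌋₊ : ℝ) := by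
    unfold Gn; push_cast; rfl
  rw [hG]
  unfold bT at hb
  generalize e ^ ⌊e * n⌋₊ * (1 - e) ^ (n - ⌊e * n⌋₊) = w at *
  have hc0 : (0 : ℝ) ≤ (n.choose ⌊e * n⌋₊ : ℝ) := Nat.cast_nonneg _
  generalize (n.choose ⌊e * n⌋₊ : ℝ) = c at *
  have h3 := h.trans h2
  have hR0 : (0 : ℝ) ≤ Rn t e n := Nat.cast_nonneg _
  have hn0 : (0 : ℝ) ≤ 2 * (n + 1) * c := by positivity
  have h4 := mul_le_mul_of_nonneg_left hb hR0
  have h5 := mul_le_mul_of_nonneg_left h3 hn0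
  linarith

lemma Rn_pos {e t : ℝ} (he0 : 0 < e) (he1 : e < 1 / 2) (ht : 0 < t) (n : ℕ) : 1 ≤ Rn t e n := by
  have hkn : ⌊e * n⌋₊ ≤ n := by
    apply Nat.floor_le_of_le
    nlinarith [(Nat.cast_nonneg n : (0 : ℝ) ≤ n)]
  obtain ⟨S, -, hS⟩ := Finset.exists_subset_card_eq (s := (univ : Finset (Fin n)))
    (n := ⌊e * n⌋₊) (by simpa using hkn)
  have h1 : 1 ≤ ⌊(2 : ℝ) ^ (t * n)⌋₊ := by
    apply Nat.le_floor
    push_cast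
    exact Real.one_le_rpow (by norm_num) (by positivity)
  have := Finset.le_sup (f := fun AB : Finset (Fin n → Bool) × Finset (Fin n → Bool) =>
      ((AB.1 ×ˢ AB.2).filter fun p => hammingDist p.1 p.2 = ⌊e * n⌋₊).card)
      (s := ((Finset.univ.powerset.filter
      fun A : Finset (Fin n → Bool) => A.card ≤ ⌊(2 : ℝ) ^ (t * n)⌋₊) ×ˢ
   (Finset.univ.powerset.filter
      fun B : Finset (Fin n → Bool) => B.card ≤ ⌊(2 : ℝ) ^ (t * n)⌋₊)))
      (b := ({fun i => decide (i ∈ S)}, {fun _ => false})) (by simp [h1])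
  refine le_trans ?_ this
  rw [Nat.succ_le_iff, Finset.card_pos]
  refine ⟨(fun i => decide (i ∈ S), fun _ => false), ?_⟩
  simp [hammingDist, hS]

theorem stmt13 (ε τ : ℝ) (hε0 : 0 < ε) (hε1 : ε < 1 / 2) (hτ0 : 0 < τ) (hτ1 : τ < 1) :
    limsup (fun n : ℕ => Real.logb 2 ((Rn τ ε n : ℝ) / (Gn ε n : ℝ)) / n) atTop ≤
      -(1 - τ) / (1 - ε) := by
  have hGpos : ∀ n, (0 : ℝ) < Gn ε n := by
    intro n
    have hkn : ⌊ε * n⌋₊ ≤ n := by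
      apply Nat.floor_le_of_le
      nlinarith [(Nat.cast_nonneg n : (0 : ℝ) ≤ n)]
    unfold Gn
    exact_mod_cast Nat.mul_pos (by positivity) (Nat.choose_pos hkn)
  have hRpos : ∀ n, (1 : ℝ) ≤ Rn τ ε n := fun n => by exact_mod_cast Rn_pos hε0 hε1 hτ0 n
  have hub : ∀ n : ℕ, 1 ≤ n → Real.logb 2 ((Rn τ ε n : ℝ) / (Gn ε n : ℝ)) / n ≤
      Real.logb 2 (2 * (n + 1)) / n + -(1 - τ) / (1 - ε) := by
    intro n hn
    have hn' : (0 : ℝ) < n := by exact_mod_cast hn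
    have h := (div_le_iff₀ (hGpos n)).2 (Rn_upper (t := τ) hε0 hε1 n)
    have h2 := Real.logb_le_logb_of_le (b := 2) (by norm_num)
      (div_pos (by linarith [hRpos n]) (hGpos n)) h
    rw [Real.logb_mul (by positivity) (by positivity), Real.logb_rpow (by norm_num) (by norm_num)]
      at h2
    rw [div_le_iff₀ hn', add_mul, div_mul_cancel₀ _ hn'.ne']
    linarith
  have hlb : ∀ n : ℕ, 1 ≤ n → -2 ≤ Real.logb 2 ((Rn τ ε n : ℝ) / (Gn ε n : ℝ)) / n := by
    intro n hn
    have hn' : (0 : ℝ) < n := by exact_mod_cast hn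
    have hG : (Gn ε n : ℝ) ≤ 2 ^ (2 * n : ℝ) := by
      have : Gn ε n ≤ 2 ^ n * 2 ^ n := Nat.mul_le_mul_left _ (Nat.choose_le_two_pow _ _)
      calc (Gn ε n : ℝ) ≤ ((2 ^ n * 2 ^ n : ℕ) : ℝ) := by exact_mod_cast this
        _ = _ := by
          rw [two_mul, Real.rpow_add (by norm_num), Real.rpow_natCast]; push_cast; rfl
    have h2 := Real.logb_le_logb_of_le (b := 2) (by norm_num) (hGpos n) hG
    rw [Real.logb_rpow (by norm_num) (by norm_num)] at h2
    have h3 := Real.logb_nonneg (b := 2) (by norm_num) (hRpos n)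
    rw [Real.logb_div (by linarith [hRpos n]) (hGpos n).ne', le_div_iff₀ hn']
    linarith
  have hlim : Tendsto (fun n : ℕ => Real.logb 2 (2 * (n + 1)) / n + -(1 - τ) / (1 - ε)) atTop
      (nhds (-(1 - τ) / (1 - ε))) := by
    have h0 : Tendsto (fun n : ℕ => Real.logb 2 (2 * (n + 1)) / n) atTop (nhds 0) := by
      have h1 := (Real.tendsto_pow_log_div_mul_add_atTop (1 / 2) (-1) 1 (by norm_num)).comp
        (tendsto_atTop_mono (f := fun n : ℕ => (n : ℝ)) (g := fun n : ℕ => (2 : ℝ) * (n + 1))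
          (fun n => by nlinarith [(Nat.cast_nonneg n : (0 : ℝ) ≤ n)])
          tendsto_natCast_atTop_atTop)
      have h2 := h1.div_const (Real.log 2)
      rw [zero_div] at h2
      refine h2.congr fun n => ?_
      simp only [Function.comp, pow_one, Real.logb]
      rw [show (1 / 2 : ℝ) * (2 * (n + 1)) + -1 = n by ring]
      rw [div_right_comm]
    simpa using h0.add_const (-(1 - τ) / (1 - ε))
  rw [← hlim.limsup_eq]
  apply limsup_le_limsup
  · filter_upwards [eventually_ge_atTop 1] with n hn using hub n hn
  · exact IsBoundedUnder.isCoboundedUnder_le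
      ⟨-2, by simpa using ⟨1, fun n hn => hlb n hn⟩⟩
  · exact hlim.isBoundedUnder_le
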